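/- Define the Domb numbers D_n = ∑_{k=0}^{n} binom(n, k)² · binom(2k, k) · binom(2n−2k, n−k) for n ∈ ℕ. Then D_0 = 1, D_1 = 4, and for all n ≥ 2 the recurrence n³ · D_n − 2(2n−1)(5n² − 5n + 2) · D_{n−1} + 64(n−1)³ · D_{n−2} = 0 holds. -/

import Mathlib

/-!
Creative telescoping (Zeilberger). Write `D_n = ∑_{i+j=n} t(i,j)` with
`t(i,j) = C(i+j,i)² C(2i,i) C(2j,j)`. The operator of the recurrence, applied to `t(i,j)` in the
variable `j` with `i` fixed, equals `G(i,j+1) - G(i+1,j)` for a rational multiple `G` of `t`.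
Summing over `i + j = n` leaves only `G(0,n+1) = 0` and `G(n+1,0)`, and the latter cancels the
three terms of `D_{n+1}` and `D_{n+2}` which are not of the form `t(i,j+1)`, resp. `t(i,j+2)`,
with `i + j = n`.
-/

open Finset

theorem sum_antidiagonal_succ_right_sub_succ_left {M : Type*} [AddCommGroup M]
    (g : ℕ → ℕ → M) (n : ℕ) :
    ∑ p ∈ antidiagonal n, (g p.1 (p.2 + 1) - g (p.1 + 1) p.2) = g 0 (n + 1) - g (n + 1) 0 := by
  have h := (Nat.sum_antidiagonal_succ (n := n) (f := fun p ↦ g p.1 p.2)).symm.trans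
    Nat.sum_antidiagonal_succ'
  rw [sum_sub_distrib, sub_eq_sub_iff_add_eq_add, add_comm, ← h]

/-- The summand of the Domb number `D_{i+j}`, indexed by both parts `i` and `j` so that no
truncated subtraction occurs. -/
def dombTerm (i j : ℕ) : ℕ :=
  (i + j).choose i ^ 2 * i.centralBinom * j.centralBinom

/-- The `n`-th Domb number; the sum over `k ≤ n` of the literature is written over the pairs
`(k, n - k)`. -/
def dombNumber (n : ℕ) : ℕ :=
  ∑ p ∈ antidiagonal n, dombTerm p.1 p.2

theorem dombNumber_eq_sum_range (n : ℕ) :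
    dombNumber n = ∑ k ∈ range (n + 1),
      n.choose k ^ 2 * (2 * k).choose k * (2 * n - 2 * k).choose (n - k) := by
  rw [dombNumber, Nat.sum_antidiagonal_eq_sum_range_succ dombTerm]
  refine sum_congr rfl fun k hk ↦ ?_
  rw [dombTerm, Nat.add_sub_cancel' (mem_range_succ_iff.mp hk), Nat.centralBinom,
    Nat.centralBinom, Nat.mul_sub]

theorem dombTerm_comm (i j : ℕ) : dombTerm i j = dombTerm j i := by
  rw [dombTerm, dombTerm, Nat.choose_symm_add, add_comm i j, mul_right_comm]

theorem dombTerm_succ_right (i j : ℕ) :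
    (dombTerm i (j + 1) : ℚ) =
      2 * (i + j + 1) ^ 2 * (2 * j + 1) / (j + 1) ^ 3 * dombTerm i j := by
  have hchoose : ((i + (j + 1)).choose i : ℚ) * (j + 1) = (i + j).choose i * (i + j + 1) := by
    have h := Nat.choose_mul_succ_eq (i + j) i
    rw [add_assoc i j 1, Nat.add_sub_cancel_left] at h
    exact_mod_cast h.symm
  have hcentral : ((j : ℚ) + 1) * (j + 1).centralBinom = 2 * (2 * j + 1) * j.centralBinom := by
    exact_mod_cast Nat.succ_mul_centralBinom_succ j
  rw [← eq_div_iff (by positivity)] at hchoose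
  rw [mul_comm, ← eq_div_iff (by positivity)] at hcentral
  simp only [dombTerm, Nat.cast_mul, Nat.cast_pow, hchoose, hcentral]
  field_simp

theorem dombTerm_succ_left (i j : ℕ) :
    (dombTerm (i + 1) j : ℚ) =
      2 * (i + j + 1) ^ 2 * (2 * i + 1) / (i + 1) ^ 3 * dombTerm i j := by
  rw [dombTerm_comm, dombTerm_succ_right, dombTerm_comm, add_comm (i : ℚ) j]

/-- The certificate `G(i,j)` of the telescoping, found by Zeilberger's algorithm and
reindexed so that the difference in `i` at fixed `i + j` becomes `G(i,j+1) - G(i+1,j)`. -/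
def dombCertificate (i j : ℕ) : ℚ :=
  2 * i ^ 3 * (i * (i + 5 * (j + 1)) * (2 * j + 1) + 2 * (j + 1) ^ 2 * (6 * j + 1)) / (j + 1) ^ 3 *
    dombTerm i j

theorem dombTerm_recurrence (i j : ℕ) :
    (i + j + 2 : ℚ) ^ 3 * dombTerm i (j + 2)
      - 2 * (2 * (i + j) + 3) * (5 * (i + j) ^ 2 + 15 * (i + j) + 12) * dombTerm i (j + 1)
      + 64 * (i + j + 1) ^ 3 * dombTerm i j
    = dombCertificate i (j + 1) - dombCertificate (i + 1) j := by
  simp only [dombCertificate, dombTerm_succ_left, dombTerm_succ_right]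
  push_cast
  field_simp
  ring

theorem dombCertificate_zero_right (n : ℕ) :
    dombCertificate (n + 1) 0 =
      (n + 2 : ℚ) ^ 3 * (dombTerm (n + 2) 0 + dombTerm (n + 1) 1)
        - 2 * (2 * n + 3) * (5 * n ^ 2 + 15 * n + 12) * dombTerm (n + 1) 0 := by
  rw [dombCertificate, dombTerm_succ_left (n + 1), dombTerm_succ_right (n + 1) 0]
  push_cast
  field_simp
  ring

theorem dombNumber_succ (n : ℕ) :
    dombNumber (n + 1) =
      dombTerm (n + 1) 0 + ∑ p ∈ antidiagonal n, dombTerm p.1 (p.2 + 1) :=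
  Nat.sum_antidiagonal_succ' ..

theorem dombNumber_add_two (n : ℕ) :
    dombNumber (n + 2) =
      dombTerm (n + 2) 0 + dombTerm (n + 1) 1 +
        ∑ p ∈ antidiagonal n, dombTerm p.1 (p.2 + 2) := by
  rw [dombNumber_succ, Nat.sum_antidiagonal_succ', ← add_assoc]

theorem sum_dombTerm_recurrence (n : ℕ) :
    (n + 2 : ℚ) ^ 3 * ∑ p ∈ antidiagonal n, (dombTerm p.1 (p.2 + 2) : ℚ)
      - 2 * (2 * n + 3) * (5 * n ^ 2 + 15 * n + 12) *
        ∑ p ∈ antidiagonal n, (dombTerm p.1 (p.2 + 1) : ℚ)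
      + 64 * (n + 1) ^ 3 * ∑ p ∈ antidiagonal n, (dombTerm p.1 p.2 : ℚ)
    = -dombCertificate (n + 1) 0 := by
  have hzero : dombCertificate 0 (n + 1) = 0 := by simp [dombCertificate]
  rw [← zero_sub, ← hzero, ← sum_antidiagonal_succ_right_sub_succ_left, mul_sum, mul_sum, mul_sum,
    ← sum_sub_distrib, ← sum_add_distrib]
  refine sum_congr rfl fun p hp ↦ ?_
  rw [← dombTerm_recurrence, ← mem_antidiagonal.mp hp, Nat.cast_add]

theorem dombNumber_recurrence (n : ℕ) :
    (n + 2 : ℤ) ^ 3 * dombNumber (n + 2)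
      - 2 * (2 * n + 3) * (5 * n ^ 2 + 15 * n + 12) * dombNumber (n + 1)
      + 64 * (n + 1) ^ 3 * dombNumber n = 0 := by
  suffices h : (n + 2 : ℚ) ^ 3 * dombNumber (n + 2)
      - 2 * (2 * n + 3) * (5 * n ^ 2 + 15 * n + 12) * dombNumber (n + 1)
      + 64 * (n + 1) ^ 3 * dombNumber n = 0 by exact_mod_cast h
  rw [dombNumber_add_two, dombNumber_succ, dombNumber]
  push_cast
  linear_combination sum_dombTerm_recurrence n - dombCertificate_zero_right n

/-- The Domb numbers `D_n = ∑_{k=0}^n C(n,k)² C(2k,k) C(2n-2k,n-k)` satisfy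
`D_0 = 1`, `D_1 = 4`, and
`n³ D_n - 2(2n-1)(5n²-5n+2) D_{n-1} + 64(n-1)³ D_{n-2} = 0` for `n ≥ 2`. -/
theorem domb_recurrence (D : ℕ → ℤ)
    (hD : ∀ n, D n = ∑ k ∈ Finset.range (n + 1),
      (n.choose k : ℤ) ^ 2 * ((2 * k).choose k : ℤ) *
        ((2 * n - 2 * k).choose (n - k) : ℤ)) :
    D 0 = 1 ∧ D 1 = 4 ∧
    ∀ n : ℕ, 2 ≤ n →
      (n : ℤ) ^ 3 * D n
      - 2 * (2 * (n : ℤ) - 1) * (5 * (n : ℤ) ^ 2 - 5 * (n : ℤ) + 2) * D (n - 1)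
      + 64 * ((n : ℤ) - 1) ^ 3 * D (n - 2) = 0 := by
  have hdomb (n : ℕ) : D n = dombNumber n := by
    rw [hD, dombNumber_eq_sum_range]
    push_cast
    rfl
  refine ⟨by simp [hD], by simp [hD, sum_range_succ], fun n hn ↦ ?_⟩
  obtain ⟨m, rfl⟩ := Nat.exists_eq_add_of_le' hn
  rw [Nat.add_sub_cancel, Nat.add_succ_sub_one, hdomb, hdomb, hdomb]
  push_cast
  linear_combination dombNumber_recurrence m
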